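/- Every continuous linear functional T on the Banach space (O^m_{n,ω,p}(ℝ^N), r_{m,n,p}) (1 < p < ∞) admits a representation T = Σ_{α∈ℕ₀^N} ∂^α f_α, where the f_α are measurable functions with Σ_α ‖e^{nω} f_α‖_{p'}^{p'} exp(p'm φ*(|α|/m)) < ∞ and derivatives are taken distributionally; i.e. T(φ) = Σ_α (−1)^{|α|} ∫_{ℝ^N} f_α(x) ∂^α φ(x) dx for all φ ∈ O^m_{n,ω,p}(ℝ^N). -/

import Mathlib

open MeasureTheory Real ENNReal Filter

noncomputable section

abbrev Euc (N : ℕ) := EuclideanSpace ℝ (Fin N)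

/-- First-order partial derivative in direction `i`. -/
def pd {N : ℕ} (i : Fin N) (f : Euc N → ℂ) : Euc N → ℂ :=
  fun x => fderiv ℝ f x (EuclideanSpace.single i (1:ℝ))

def pdPow {N : ℕ} (i : Fin N) : ℕ → (Euc N → ℂ) → (Euc N → ℂ)
  | 0, f => f
  | n+1, f => pd i (pdPow i n f)

/-- Multi-index partial derivative `∂^α f`. -/
def mderiv {N : ℕ} (α : Fin N → ℕ) (f : Euc N → ℂ) : Euc N → ℂ :=
  (List.finRange N).foldr (fun i g => pdPow i (α i) g) f

/-- Length `|α|` of a multi-index. -/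
def msize {N : ℕ} (α : Fin N → ℕ) : ℕ := ∑ i, α i

/-- Weighted `L^p` norm `‖e^{w} g‖_p` (value in `ℝ≥0∞`). -/
def wLp {N : ℕ} (p : ℝ≥0∞) (w : Euc N → ℝ) (g : Euc N → ℂ) : ℝ≥0∞ :=
  eLpNorm (fun x => Real.exp (w x) * ‖g x‖) p volume

def youngConj (φ : ℝ → ℝ) (s : ℝ) : ℝ :=
  sSup {y | ∃ t ≥ 0, y = s * t - φ t}

/-- Young conjugate `φ*` of `φ_ω = ω ∘ exp`. -/
def phiStar (ω : ℝ → ℝ) (s : ℝ) : ℝ :=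
  youngConj (fun t => ω (Real.exp t)) s

/-- A non-quasianalytic weight function in the sense of Braun–Meise–Taylor. -/
structure IsWeightFun (ω : ℝ → ℝ) : Prop where
  continuous : ContinuousOn ω (Set.Ici 0)
  mono : MonotoneOn ω (Set.Ici 0)
  nonneg : ∀ t, 0 ≤ t → 0 ≤ ω t
  alpha : ∃ K ≥ 1, ∀ t ≥ 0, ω (2*t) ≤ K * (1 + ω t)
  beta : IntegrableOn (fun t => ω t / (1 + t^2)) (Set.Ici 1)
  gamma : ∃ a b : ℝ, 0 < b ∧ ∀ t ≥ 0, a + b * Real.log (1+t) ≤ ω t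
  delta : ConvexOn ℝ (Set.Ici 0) (fun t => ω (Real.exp t))
  vanish : ∀ t ∈ Set.Icc (0:ℝ) 1, ω t = 0

/-- The norm `r_{m,n,p}` of the space `O^m_{n,ω,p}(ℝ^N)`. -/
def rnorm {N : ℕ} (ω : ℝ → ℝ) (m : ℕ) (n : ℤ) (p : ℝ) (f : Euc N → ℂ) : ℝ≥0∞ :=
  (∑' α : Fin N → ℕ,
    (wLp (ENNReal.ofReal p) (fun x => -((n : ℝ) * ω ‖x‖)) (mderiv α f)) ^ p *
      ENNReal.ofReal (Real.exp (-((m : ℝ) * p * phiStar ω ((msize α : ℝ) / m))))) ^ (1/p)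

/-- Membership in `O^m_{n,ω,p}(ℝ^N)`. -/
def memO {N : ℕ} (ω : ℝ → ℝ) (m : ℕ) (n : ℤ) (p : ℝ) (φ : Euc N → ℂ) : Prop :=
  ContDiff ℝ (⊤ : ℕ∞) φ ∧ rnorm ω m n p φ < ⊤


open scoped Topology symmDiff

/-- The complex measure induced by a functional on `L^p` of a finite measure. -/
def dualMeas {X : Type*} [MeasurableSpace X] (ν : Measure X) [IsFiniteMeasure ν]
    (p : ℝ≥0∞) [Fact (1 ≤ p)] (hp : p ≠ ⊤) (L : Lp ℂ p ν →L[ℂ] ℂ) : ComplexMeasure X where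
  measureOf' A := open Classical in
    if hA : MeasurableSet A then L (indicatorConstLp p hA (measure_ne_top ν A) 1) else 0
  empty' := by simp
  not_measurable' A hA := by simp [hA]
  m_iUnion' A hA hd := by
    have hU : MeasurableSet (⋃ i, A i) := MeasurableSet.iUnion hA
    simp only [hA, hU, dif_pos]
    have key : HasSum (fun i => indicatorConstLp p (hA i) (measure_ne_top ν (A i)) (1:ℂ))
        (indicatorConstLp p hU (measure_ne_top ν _) (1:ℂ)) := by
      have hs : ∀ s : Finset ℕ, MeasurableSet (⋃ i ∈ s, A i) := fun s =>
        Finset.measurableSet_biUnion s (fun i _ => hA i)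
      have hsum : ∀ s : Finset ℕ,
          ∑ i ∈ s, indicatorConstLp p (hA i) (measure_ne_top ν (A i)) (1:ℂ)
            = indicatorConstLp p (hs s) (measure_ne_top ν _) (1:ℂ) := by
        intro s
        induction s using Finset.induction_on with
        | empty => simp
        | insert a s ha ih =>
          rw [Finset.sum_insert ha, ih, ← indicatorConstLp_disjoint_union]
          · congr 1
            simp
          · rw [Set.disjoint_iUnion₂_right]
            intro i hi
            exact hd (fun h => ha (h ▸ hi))
      unfold HasSum
      simp only [hsum]
      refine tendsto_indicatorConstLp_set hp ?_
      have hle : ∀ s : Finset ℕ, ν ((⋃ i ∈ s, A i) ∆ (⋃ i, A i)) ≤ ∑' i : {i // i ∉ s}, ν (A i) := by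
        intro s
        refine le_trans (measure_mono ?_) (measure_iUnion_le _)
        intro x hx
        rcases hx with ⟨h1, h2⟩ | ⟨h1, h2⟩
        · simp at h1 h2
          obtain ⟨i, _, hi⟩ := h1
          exact absurd hi (h2 i)
        · simp at h1 h2 ⊢
          obtain ⟨i, hi⟩ := h1
          exact ⟨i, fun h => h2 i h hi, hi⟩
      have hfin : ∑' i, ν (A i) ≠ ⊤ := by
        rw [← measure_iUnion hd hA]; exact measure_ne_top _ _
      exact tendsto_of_tendsto_of_tendsto_of_le_of_le tendsto_const_nhds
        (ENNReal.tendsto_tsum_compl_atTop_zero hfin) (fun _ => zero_le) hle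
    exact key.mapL L

theorem dual_rn {X : Type*} [MeasurableSpace X] (ν : Measure X) [IsFiniteMeasure ν]
    (p : ℝ≥0∞) [Fact (1 ≤ p)] (hp : p ≠ ⊤) (L : Lp ℂ p ν →L[ℂ] ℂ) :
    ∃ g : X → ℂ, StronglyMeasurable g ∧ Integrable g ν ∧ ∀ (A : Set X) (hA : MeasurableSet A),
      L (indicatorConstLp p hA (measure_ne_top ν A) 1) = ∫ x in A, g x ∂ν := by
  let c := dualMeas ν p hp L
  have hc : ∀ (A : Set X) (hA : MeasurableSet A),
      c A = L (indicatorConstLp p hA (measure_ne_top ν A) 1) := fun A hA => dif_pos hA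
  have hzero : ∀ A, MeasurableSet A → ν A = 0 → c A = 0 := by
    intro A hA h0
    rw [hc A hA]
    have : indicatorConstLp p hA (measure_ne_top ν A) (1:ℂ) = 0 := by
      rw [← norm_eq_zero, norm_indicatorConstLp (zero_lt_one.trans_le (Fact.out : 1 ≤ p)).ne' hp]
      have hp1 : 1 ≤ p := Fact.out
      have : p.toReal ≠ 0 := (ENNReal.toReal_pos (zero_lt_one.trans_le hp1).ne' hp).ne'
      simp [measureReal_def, h0, this]
    rw [this, map_zero]
  have hac : ∀ (s : SignedMeasure X), (∀ A, MeasurableSet A → ν A = 0 → s A = 0) →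
      s ≪ᵥ ν.toENNRealVectorMeasure := by
    intro s hs
    refine VectorMeasure.AbsolutelyContinuous.mk fun A hA h => hs A hA ?_
    rwa [Measure.toENNRealVectorMeasure_apply_measurable hA] at h
  have hre := SignedMeasure.withDensityᵥ_rnDeriv_eq (ComplexMeasure.re c) ν
    (hac _ (fun A hA h => by
      change (c A).re = 0
      rw [hzero A hA h]; rfl))
  have him := SignedMeasure.withDensityᵥ_rnDeriv_eq (ComplexMeasure.im c) ν
    (hac _ (fun A hA h => by
      change (c A).im = 0
      rw [hzero A hA h]; rfl))
  have hi : Integrable (c.rnDeriv ν) ν := c.integrable_rnDeriv ν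
  refine ⟨hi.1.mk _, hi.1.stronglyMeasurable_mk, hi.congr hi.1.ae_eq_mk, fun A hA => ?_⟩
  rw [← integral_congr_ae (ae_restrict_of_ae hi.1.ae_eq_mk), ← hc A hA]
  have e1 : (c A).re = ∫ x in A, c.re.rnDeriv ν x ∂ν := by
    rw [← withDensityᵥ_apply (SignedMeasure.integrable_rnDeriv _ _) hA, hre]; rfl
  have e2 : (c A).im = ∫ x in A, c.im.rnDeriv ν x ∂ν := by
    rw [← withDensityᵥ_apply (SignedMeasure.integrable_rnDeriv _ _) hA, him]; rfl
  apply Complex.ext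
  · rw [e1, ← RCLike.re_eq_complex_re, ← integral_re hi.integrableOn]; rfl
  · rw [e2, ← RCLike.im_eq_complex_im, ← integral_im hi.integrableOn]; rfl

/-- two functionals agreeing on indicators agree -/
theorem clm_ext_ind {X : Type*} [MeasurableSpace X] (ν : Measure X) [IsFiniteMeasure ν]
    (p : ℝ≥0∞) [Fact (1 ≤ p)] (hp : p ≠ ⊤) (L M : Lp ℂ p ν →L[ℂ] ℂ)
    (h : ∀ (A : Set X) (hA : MeasurableSet A),
      L (indicatorConstLp p hA (measure_ne_top ν A) 1)
        = M (indicatorConstLp p hA (measure_ne_top ν A) 1)) : L = M := by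
  ext u
  refine Lp.induction hp (fun u => L u = M u) ?_ ?_ ?_ u
  · intro c s hs hμs
    have : (Lp.simpleFunc.indicatorConst p hs hμs.ne c : Lp ℂ p ν)
        = c • indicatorConstLp p hs (measure_ne_top ν s) (1:ℂ) := by
      rw [Lp.simpleFunc.coe_indicatorConst]
      apply Lp.ext
      filter_upwards [indicatorConstLp_coeFn (p := p) (hs := hs) (hμs := hμs.ne) (c := c),
        indicatorConstLp_coeFn (p := p) (hs := hs) (hμs := hμs.ne) (c := (1:ℂ)),
        Lp.coeFn_smul c (indicatorConstLp p hs (measure_ne_top ν s) (1:ℂ))] with x h1 h2 h3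
      rw [h1, h3, Pi.smul_apply, h2]
      by_cases h : x ∈ s <;> simp [h]
    rw [this, map_smul, map_smul, h]
  · intro f g hf hg _ h1 h2
    rw [map_add, map_add, h1, h2]
  · exact isClosed_eq L.continuous M.continuous

/-- pairing with an `L^q` function. -/
theorem exists_pairing {X : Type*} [MeasurableSpace X] (ν : Measure X) 
    (p q : ℝ≥0∞) [Fact (1 ≤ p)] [Fact (1 ≤ q)] [HolderConjugate p q] (g : X → ℂ)
    (hg : MemLp g q ν) : ∃ M : Lp ℂ p ν →L[ℂ] ℂ, ∀ u : Lp ℂ p ν, M u = ∫ x, g x * u x ∂ν := by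
  have : HolderConjugate q p := inferInstance
  refine ⟨(ContinuousLinearMap.mul ℂ ℂ).lpPairing ν q p (hg.toLp g), fun u => ?_⟩
  rw [ContinuousLinearMap.lpPairing_eq_integral]
  apply integral_congr_ae
  filter_upwards [hg.coeFn_toLp] with x hx
  simp [hx]

theorem exists_indmul {X : Type*} [MeasurableSpace X] (ν : Measure X) [IsFiniteMeasure ν]
    (p : ℝ≥0∞) [Fact (1 ≤ p)] (A : Set X) (hA : MeasurableSet A) :
    ∃ M : Lp ℂ p ν →L[ℂ] Lp ℂ p ν, ∀ u : Lp ℂ p ν, M u =ᵐ[ν] A.indicator u := by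
  refine ⟨(ContinuousLinearMap.mul ℂ ℂ).holderL ν ⊤ p p
    (indicatorConstLp ⊤ hA (measure_ne_top ν A) 1), fun u => ?_⟩
  rw [ContinuousLinearMap.holderL_apply_apply]
  refine (ContinuousLinearMap.coeFn_holder _ _ _).trans ?_
  filter_upwards [indicatorConstLp_coeFn (p := ⊤) (hs := hA) (hμs := measure_ne_top ν A) (c := (1:ℂ))]
    with x hx
  rw [hx]
  by_cases h : x ∈ A <;> simp [h]

theorem bdd_test {X : Type*} [MeasurableSpace X] (ν : Measure X) [IsFiniteMeasure ν]
    (p q : ℝ) (hpq : p.HolderConjugate q) (g : X → ℂ) (hg : StronglyMeasurable g)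
    (K : ℝ) (hK : ∀ x, ‖g x‖ ≤ K) (D : ℝ) (hD : 0 ≤ D)
    (h : ∀ u : X → ℂ, StronglyMeasurable u → (∀ x, g x = 0 → u x = 0) →
      MemLp u (ENNReal.ofReal p) ν →
      ‖∫ x, g x * u x ∂ν‖ ≤ D * (eLpNorm u (ENNReal.ofReal p) ν).toReal) :
    eLpNorm g (ENNReal.ofReal q) ν ≤ ENNReal.ofReal D := by
  have hp0 := hpq.pos
  have hq0 := hpq.symm.pos
  have hp1 := hpq.lt
  have hq1 := hpq.symm.lt
  let u : X → ℂ := fun x => (starRingEnd ℂ (g x)) * ((‖g x‖ ^ (q - 2) : ℝ) : ℂ)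
  have hun : ∀ x, ‖u x‖ = ‖g x‖ ^ (q - 1) := by
    intro x
    by_cases h0 : g x = 0
    · simp [u, h0, Real.zero_rpow (sub_pos.2 hq1).ne']
    · have : 0 < ‖g x‖ := norm_pos_iff.2 h0
      simp only [u, norm_mul, RCLike.norm_conj, Complex.norm_real, Real.norm_eq_abs]
      rw [abs_of_nonneg (by positivity), show q - 1 = 1 + (q - 2) by ring,
        Real.rpow_add this, Real.rpow_one]
  have hgu : ∀ x, g x * u x = ((‖g x‖ ^ q : ℝ) : ℂ) := by
    intro x
    by_cases h0 : g x = 0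
    · simp [u, h0, Real.zero_rpow hq0.ne']
    · have : 0 < ‖g x‖ := norm_pos_iff.2 h0
      simp only [u]
      rw [← mul_assoc, Complex.mul_conj, Complex.normSq_eq_norm_sq, ← Complex.ofReal_mul,
        ← Real.rpow_natCast, ← Real.rpow_add this]
      congr 2
      push_cast; ring
  have hum : StronglyMeasurable u := by
    have hm := hg.measurable
    apply Measurable.stronglyMeasurable
    apply Measurable.mul
    · exact Complex.continuous_conj.measurable.comp hm
    · exact Complex.measurable_ofReal.comp (hm.norm.pow_const _)
  have huL : MemLp u (ENNReal.ofReal p) ν := by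
    refine MemLp.of_bound hum.aestronglyMeasurable (K ^ (q - 1)) (Eventually.of_forall fun x => ?_)
    rw [hun]
    exact Real.rpow_le_rpow (norm_nonneg _) (hK x) (sub_pos.2 hq1).le
  have hgL : MemLp g (ENNReal.ofReal q) ν :=
    MemLp.of_bound hg.aestronglyMeasurable K (Eventually.of_forall hK)
  have key := h u hum (fun x hx => by simp [u, hx]) huL
  have hpo : ENNReal.ofReal p ≠ 0 := by simpa using hp0
  have hqo : ENNReal.ofReal q ≠ 0 := by simpa using hq0
  set J := ∫ x, ‖g x‖ ^ q ∂ν with hJ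
  have hJ0 : 0 ≤ J := integral_nonneg fun x => by positivity
  have e1 : ‖∫ x, g x * u x ∂ν‖ = J := by
    simp_rw [hgu]
    rw [integral_complex_ofReal, Complex.norm_real, Real.norm_eq_abs, abs_of_nonneg hJ0]
  have e2 : (eLpNorm u (ENNReal.ofReal p) ν).toReal = J ^ (1/p) := by
    rw [huL.eLpNorm_eq_integral_rpow_norm hpo ENNReal.ofReal_ne_top, ENNReal.toReal_ofReal hp0.le]
    have : ∀ x, ‖u x‖ ^ p = ‖g x‖ ^ q := by
      intro x
      rw [hun, ← Real.rpow_mul (norm_nonneg _)]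
      congr 1
      have := hpq.symm.sub_one_mul_conj
      linarith
    simp_rw [this]
    rw [ENNReal.toReal_ofReal (by positivity), one_div]
  rw [hgL.eLpNorm_eq_integral_rpow_norm hqo ENNReal.ofReal_ne_top, ENNReal.toReal_ofReal hq0.le]
  apply ENNReal.ofReal_le_ofReal
  rw [← hJ]
  rw [e1, e2] at key
  rcases hJ0.eq_or_lt with h0 | h0
  · rw [← h0, Real.zero_rpow (inv_pos.2 hq0).ne']; exact hD
  · have h3 : J ^ q⁻¹ * J ^ (1/p) = J := by
      rw [← Real.rpow_add h0]
      have := hpq.inv_add_inv_eq_one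
      rw [show q⁻¹ + 1/p = 1 by rw [one_div]; linarith, Real.rpow_one]
    have h4 : 0 < J ^ (1/p) := by positivity
    rw [← h3] at key
    nth_rewrite 2 [h3] at key
    exact le_of_mul_le_mul_right key h4

theorem dual_finite {X : Type*} [MeasurableSpace X] (ν : Measure X) [IsFiniteMeasure ν]
    (p q : ℝ) (hpq : p.HolderConjugate q) [Fact (1 ≤ ENNReal.ofReal p)]
    (L : Lp ℂ (ENNReal.ofReal p) ν →L[ℂ] ℂ) :
    ∃ g : X → ℂ, StronglyMeasurable g ∧ MemLp g (ENNReal.ofReal q) ν ∧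
      ∀ u, L u = ∫ x, g x * u x ∂ν := by
  have : Fact (1 ≤ ENNReal.ofReal q) := ⟨by simpa using hpq.symm.lt.le⟩
  have : HolderConjugate (ENNReal.ofReal p) (ENNReal.ofReal q) := hpq.ennrealOfReal
  have hpt : ENNReal.ofReal p ≠ ⊤ := ENNReal.ofReal_ne_top
  obtain ⟨g, hgm, hgi, hgA⟩ := dual_rn ν _ hpt L
  let A : ℕ → Set X := fun n => {x | ‖g x‖ ≤ n}
  have hA : ∀ n, MeasurableSet (A n) := fun n =>
    measurableSet_le hgm.measurable.norm measurable_const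
  let gn : ℕ → X → ℂ := fun n => (A n).indicator g
  have hgn : ∀ n, StronglyMeasurable (gn n) := fun n => hgm.indicator (hA n)
  have hbd : ∀ n x, ‖gn n x‖ ≤ n := by
    intro n x
    by_cases hx : x ∈ A n
    · simp only [gn, Set.indicator_of_mem hx]
      exact hx
    · simp [gn, hx]
  have hgnL : ∀ n, MemLp (gn n) (ENNReal.ofReal q) ν := fun n =>
    MemLp.of_bound (hgn n).aestronglyMeasurable n (Eventually.of_forall (hbd n))
  have hnorm : ∀ n, eLpNorm (gn n) (ENNReal.ofReal q) ν ≤ ENNReal.ofReal ‖L‖ := by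
    intro n
    obtain ⟨M, hM⟩ := exists_indmul ν (ENNReal.ofReal p) (A n) (hA n)
    obtain ⟨P, hP⟩ := exists_pairing ν (ENNReal.ofReal p) (ENNReal.ofReal q) (gn n) (hgnL n)
    have hLP : L.comp M = P := by
      refine clm_ext_ind ν _ hpt _ _ fun B hB => ?_
      have : M (indicatorConstLp (ENNReal.ofReal p) hB (measure_ne_top ν B) 1)
          = indicatorConstLp (ENNReal.ofReal p) ((hA n).inter hB) (measure_ne_top ν _) 1 := by
        apply Lp.ext
        filter_upwards [hM (indicatorConstLp (ENNReal.ofReal p) hB (measure_ne_top ν B) 1),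
          indicatorConstLp_coeFn (p := ENNReal.ofReal p) (hs := hB)
            (hμs := measure_ne_top ν B) (c := (1:ℂ)),
          indicatorConstLp_coeFn (p := ENNReal.ofReal p) (hs := (hA n).inter hB)
            (hμs := measure_ne_top ν _) (c := (1:ℂ))] with x h1 h2 h3
        rw [h1, h3]
        by_cases ha : x ∈ A n <;> by_cases hb : x ∈ B <;> simp [ha, hb, h2]
      rw [ContinuousLinearMap.comp_apply, this, hgA, hP, Set.inter_comm,
        ← setIntegral_indicator (hA n), ← integral_indicator hB]
      apply integral_congr_ae
      filter_upwards [indicatorConstLp_coeFn (p := ENNReal.ofReal p) (hs := hB)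
            (hμs := measure_ne_top ν B) (c := (1:ℂ))] with x hx
      rw [hx]
      by_cases hb : x ∈ B <;> simp [hb, gn]
    refine bdd_test ν p q hpq (gn n) (hgn n) n (hbd n) ‖L‖ (norm_nonneg _) ?_
    intro u hu hu0 huL
    have e1 : ∫ x, gn n x * u x ∂ν = P (huL.toLp u) := by
      rw [hP]
      apply integral_congr_ae
      filter_upwards [huL.coeFn_toLp] with x hx
      rw [hx]
    have e2 : M (huL.toLp u) = huL.toLp u := by
      apply Lp.ext
      filter_upwards [hM (huL.toLp u), huL.coeFn_toLp] with x h1 h2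
      rw [h1]
      by_cases hx : x ∈ A n
      · simp [hx]
      · have : u x = 0 := hu0 x (by simp [gn, hx])
        simp [hx, h2, this]
    rw [e1, ← hLP, ContinuousLinearMap.comp_apply, e2]
    refine (L.le_opNorm _).trans ?_
    rw [Lp.norm_toLp]
  have hgL : MemLp g (ENNReal.ofReal q) ν := by
    refine ⟨hgm.aestronglyMeasurable, lt_of_le_of_lt ?_ (ENNReal.ofReal_lt_top (r := ‖L‖))⟩
    refine (Lp.eLpNorm_lim_le_liminf_eLpNorm (fun n => (hgn n).aestronglyMeasurable) g
      (Eventually.of_forall fun x => ?_)).trans ?_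
    · apply tendsto_const_nhds.congr'
      obtain ⟨k, hk⟩ := exists_nat_ge ‖g x‖
      filter_upwards [eventually_ge_atTop k] with n hn
      have : x ∈ A n := hk.trans (by exact_mod_cast hn)
      simp [gn, this]
    · refine liminf_le_of_frequently_le' (Frequently.of_forall hnorm)
  refine ⟨g, hgm, hgL, ?_⟩
  obtain ⟨P, hP⟩ := exists_pairing ν (ENNReal.ofReal p) (ENNReal.ofReal q) g hgL
  have : L = P := by
    refine clm_ext_ind ν _ hpt _ _ fun B hB => ?_
    rw [hgA, hP, ← integral_indicator hB]
    apply integral_congr_ae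
    filter_upwards [indicatorConstLp_coeFn (p := ENNReal.ofReal p) (hs := hB)
            (hμs := measure_ne_top ν B) (c := (1:ℂ))] with x hx
    rw [hx]
    by_cases hb : x ∈ B <;> simp [hb]
  intro u
  rw [this, hP]

theorem rep_finite {X V : Type*} [MeasurableSpace X] [AddCommGroup V] [Module ℂ V]
    (ν : Measure X) [IsFiniteMeasure ν]
    (p q : ℝ) (hpq : p.HolderConjugate q) (Φ : V →ₗ[ℂ] (X → ℂ))
    (hΦ : ∀ v, MemLp (Φ v) (ENNReal.ofReal p) ν) (T : V →ₗ[ℂ] ℂ) (C : ℝ)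
    (hT : ∀ v, ‖T v‖ ≤ C * (eLpNorm (Φ v) (ENNReal.ofReal p) ν).toReal) :
    ∃ g : X → ℂ, StronglyMeasurable g ∧ MemLp g (ENNReal.ofReal q) ν ∧
      ∀ v, T v = ∫ x, g x * Φ v x ∂ν := by
  have : Fact (1 ≤ ENNReal.ofReal p) := ⟨by simpa using hpq.lt.le⟩
  let Ψ : V →ₗ[ℂ] Lp ℂ (ENNReal.ofReal p) ν :=
    { toFun := fun v => (hΦ v).toLp (Φ v)
      map_add' := fun v w => by
        rw [← MemLp.toLp_add]
        exact MemLp.toLp_congr _ _ (by rw [map_add])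
      map_smul' := fun c v => by
        rw [RingHom.id_apply, ← MemLp.toLp_const_smul]
        exact MemLp.toLp_congr _ _ (by rw [map_smul]) }
  have hΨn : ∀ v, ‖Ψ v‖ = (eLpNorm (Φ v) (ENNReal.ofReal p) ν).toReal := fun v =>
    Lp.norm_toLp _ (hΦ v)
  have hker : LinearMap.ker Ψ ≤ LinearMap.ker T := by
    intro v hv
    rw [LinearMap.mem_ker] at hv ⊢
    have := hT v
    rw [← hΨn, hv, norm_zero, mul_zero] at this
    exact norm_le_zero_iff.1 this
  let f₀ : LinearMap.range Ψ →ₗ[ℂ] ℂ :=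
    ((LinearMap.ker Ψ).liftQ T hker).comp Ψ.quotKerEquivRange.symm.toLinearMap
  have hf₀ : ∀ v, f₀ ⟨Ψ v, LinearMap.mem_range_self Ψ v⟩ = T v := by
    intro v
    simp only [f₀, LinearMap.comp_apply, LinearEquiv.coe_coe]
    rw [LinearMap.quotKerEquivRange_symm_apply_image]
    simp
  let f : StrongDual ℂ (LinearMap.range Ψ) := f₀.mkContinuous C (by
    rintro ⟨_, v, rfl⟩
    rw [hf₀]
    refine (hT v).trans_eq ?_
    rw [← hΨn]; rfl)
  obtain ⟨L, hL, -⟩ := exists_extension_norm_eq (LinearMap.range Ψ) f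
  obtain ⟨g, h1, h2, h3⟩ := dual_finite ν p q hpq L
  refine ⟨g, h1, h2, fun v => ?_⟩
  rw [← hf₀ v]
  have := hL ⟨Ψ v, LinearMap.mem_range_self Ψ v⟩
  change _ = f₀ _ at this
  rw [← this, h3]
  apply integral_congr_ae
  filter_upwards [(hΦ v).coeFn_toLp] with x hx
  change g x * ((hΦ v).toLp (Φ v)) x = _
  rw [hx]

theorem rep_sigmaFinite {X V : Type*} [MeasurableSpace X] [AddCommGroup V] [Module ℂ V]
    (μ : Measure X) [SigmaFinite μ]
    (p q : ℝ) (hpq : p.HolderConjugate q) (Φ : V →ₗ[ℂ] (X → ℂ))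
    (hΦ : ∀ v, MemLp (Φ v) (ENNReal.ofReal p) μ) (T : V →ₗ[ℂ] ℂ) (C : ℝ)
    (hT : ∀ v, ‖T v‖ ≤ C * (eLpNorm (Φ v) (ENNReal.ofReal p) μ).toReal) :
    ∃ g : X → ℂ, StronglyMeasurable g ∧ MemLp g (ENNReal.ofReal q) μ ∧
      ∀ v, T v = ∫ x, g x * Φ v x ∂μ := by
  have hp0 := hpq.pos
  have hq0 := hpq.symm.pos
  obtain ⟨ρ, hρ0, hρm, hρi⟩ := exists_pos_lintegral_lt_of_sigmaFinite μ one_ne_zero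
  let ν := μ.withDensity (fun x => (ρ x : ℝ≥0∞))
  have hνf : IsFiniteMeasure ν := isFiniteMeasure_withDensity (hρi.trans ENNReal.one_lt_top).ne
  have hνμ : ν ≪ μ := withDensity_absolutelyContinuous _ _
  -- norms
  have hnorm : ∀ (r : ℝ), 0 < r → ∀ u : X → ℂ, 
      eLpNorm u (ENNReal.ofReal r) ν
        = eLpNorm (fun x => (((ρ x : ℝ) ^ r⁻¹ : ℝ) : ℂ) * u x) (ENNReal.ofReal r) μ := by
    intro r hr u
    have hro : ENNReal.ofReal r ≠ 0 := by simpa using hr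
    rw [eLpNorm_eq_lintegral_rpow_enorm_toReal hro ENNReal.ofReal_ne_top,
      eLpNorm_eq_lintegral_rpow_enorm_toReal hro ENNReal.ofReal_ne_top, ENNReal.toReal_ofReal hr.le]
    congr 1
    rw [lintegral_withDensity_eq_lintegral_mul_non_measurable _ hρm.coe_nnreal_ennreal
      (Eventually.of_forall fun x => ENNReal.coe_lt_top)]
    apply lintegral_congr
    intro x
    rw [Pi.mul_apply, enorm_mul, ENNReal.mul_rpow_of_nonneg _ _ hr.le]
    congr 1
    rw [← ofReal_norm, Complex.norm_real, Real.norm_eq_abs, abs_of_nonneg (by positivity),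
      ENNReal.ofReal_rpow_of_nonneg (by positivity) hr.le, ← Real.rpow_mul (by positivity),
      inv_mul_cancel₀ hr.ne', Real.rpow_one, ENNReal.ofReal_coe_nnreal]
  have hρc : ∀ s : ℝ, Measurable (fun x => (((ρ x : ℝ) ^ s : ℝ) : ℂ)) := fun s =>
    Complex.measurable_ofReal.comp (hρm.coe_nnreal_real.pow_const s)
  have hρpos : ∀ x, 0 < (ρ x : ℝ) := fun x => hρ0 x
  let Θ : (X → ℂ) →ₗ[ℂ] (X → ℂ) :=
    { toFun := fun u x => (((ρ x : ℝ) ^ (-p⁻¹) : ℝ) : ℂ) * u x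
      map_add' := fun u v => by ext x; simp [mul_add]
      map_smul' := fun c v => by ext x; simp; ring }
  have hΘ : ∀ v, eLpNorm (Θ (Φ v)) (ENNReal.ofReal p) ν = eLpNorm (Φ v) (ENNReal.ofReal p) μ := by
    intro v
    rw [hnorm p hp0]
    congr 1
    ext x
    change _ * ((((ρ x : ℝ) ^ (-p⁻¹) : ℝ) : ℂ) * Φ v x) = _
    rw [← mul_assoc, ← Complex.ofReal_mul, ← Real.rpow_add (hρpos x)]
    simp
  obtain ⟨g, hgm, hgL, hg⟩ := rep_finite ν p q hpq (Θ.comp Φ) (fun v => by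
    refine ⟨?_, ?_⟩
    · exact (hρc _).aestronglyMeasurable.mul ((hΦ v).1.mono_ac hνμ)
    · rw [LinearMap.comp_apply, hΘ]; exact (hΦ v).2) T C (fun v => by
      rw [LinearMap.comp_apply, hΘ]; exact hT v)
  have hm : StronglyMeasurable (fun x => (((ρ x : ℝ) ^ q⁻¹ : ℝ) : ℂ) * g x) :=
    (hρc _).stronglyMeasurable.mul hgm
  refine ⟨fun x => (((ρ x : ℝ) ^ q⁻¹ : ℝ) : ℂ) * g x, hm, ⟨hm.aestronglyMeasurable, ?_⟩, fun v => ?_⟩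
  · rw [← hnorm q hq0]; exact hgL.2
  · rw [hg, integral_withDensity_eq_integral_smul hρm]
    congr 1
    ext x
    change ((ρ x : ℝ)) • (g x * ((((ρ x : ℝ) ^ (-p⁻¹) : ℝ) : ℂ) * Φ v x)) = _
    have : (ρ x : ℝ) ^ q⁻¹ = ρ x * (ρ x : ℝ) ^ (-p⁻¹) := by
      have h1 := hpq.inv_add_inv_eq_one
      rw [show q⁻¹ = 1 + -p⁻¹ by linarith, Real.rpow_add (hρpos x), Real.rpow_one]
    beta_reduce
    rw [this, Complex.real_smul]
    push_cast
    ring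

theorem pd_smooth {N : ℕ} (i : Fin N) {f : Euc N → ℂ} (hf : ContDiff ℝ (⊤ : ℕ∞) f) :
    ContDiff ℝ (⊤ : ℕ∞) (pd i f) := by
  unfold pd
  exact (hf.fderiv_right (m := ((⊤ : ℕ∞) : WithTop ℕ∞)) (by simp)).clm_apply contDiff_const

theorem pd_add {N : ℕ} (i : Fin N) {f g : Euc N → ℂ} (hf : ContDiff ℝ (⊤ : ℕ∞) f)
    (hg : ContDiff ℝ (⊤ : ℕ∞) g) : pd i (f + g) = pd i f + pd i g := by
  ext x
  simp only [pd, Pi.add_apply]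
  rw [fderiv_add (hf.differentiable (by simp) x) (hg.differentiable (by simp) x)]
  rfl

theorem pd_smul {N : ℕ} (i : Fin N) (c : ℂ) {f : Euc N → ℂ} (hf : ContDiff ℝ (⊤ : ℕ∞) f) :
    pd i (c • f) = c • pd i f := by
  ext x
  simp only [pd, Pi.smul_apply]
  rw [fderiv_const_smul (hf.differentiable (by simp) x)]
  rfl

theorem pdPow_smooth {N : ℕ} (i : Fin N) (k : ℕ) {f : Euc N → ℂ}
    (hf : ContDiff ℝ (⊤ : ℕ∞) f) : ContDiff ℝ (⊤ : ℕ∞) (pdPow i k f) := by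
  induction k with
  | zero => exact hf
  | succ k ih => exact pd_smooth i ih

theorem pdPow_add {N : ℕ} (i : Fin N) (k : ℕ) {f g : Euc N → ℂ} (hf : ContDiff ℝ (⊤ : ℕ∞) f)
    (hg : ContDiff ℝ (⊤ : ℕ∞) g) : pdPow i k (f + g) = pdPow i k f + pdPow i k g := by
  induction k with
  | zero => rfl
  | succ k ih =>
    simp only [pdPow]
    rw [ih, pd_add i (pdPow_smooth i k hf) (pdPow_smooth i k hg)]

theorem pdPow_smul {N : ℕ} (i : Fin N) (k : ℕ) (c : ℂ) {f : Euc N → ℂ}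
    (hf : ContDiff ℝ (⊤ : ℕ∞) f) : pdPow i k (c • f) = c • pdPow i k f := by
  induction k with
  | zero => rfl
  | succ k ih =>
    simp only [pdPow]
    rw [ih, pd_smul i c (pdPow_smooth i k hf)]

theorem mderiv_smooth {N : ℕ} (α : Fin N → ℕ) {f : Euc N → ℂ}
    (hf : ContDiff ℝ (⊤ : ℕ∞) f) : ContDiff ℝ (⊤ : ℕ∞) (mderiv α f) := by
  unfold mderiv
  induction List.finRange N with
  | nil => exact hf
  | cons i l ih => exact pdPow_smooth i _ ih

theorem mderiv_add {N : ℕ} (α : Fin N → ℕ) {f g : Euc N → ℂ} (hf : ContDiff ℝ (⊤ : ℕ∞) f)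
    (hg : ContDiff ℝ (⊤ : ℕ∞) g) : mderiv α (f + g) = mderiv α f + mderiv α g := by
  have hs : ∀ (l : List (Fin N)) (f : Euc N → ℂ), ContDiff ℝ (⊤ : ℕ∞) f →
      ContDiff ℝ (⊤ : ℕ∞) (l.foldr (fun i g => pdPow i (α i) g) f) := by
    intro l f hf
    induction l with
    | nil => exact hf
    | cons i l ih => exact pdPow_smooth i _ ih
  unfold mderiv
  induction List.finRange N with
  | nil => rfl
  | cons i l ih =>
    simp only [List.foldr_cons]
    rw [ih, pdPow_add i _ (hs l f hf) (hs l g hg)]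

theorem mderiv_smul {N : ℕ} (α : Fin N → ℕ) (c : ℂ) {f : Euc N → ℂ}
    (hf : ContDiff ℝ (⊤ : ℕ∞) f) : mderiv α (c • f) = c • mderiv α f := by
  have hs : ∀ (l : List (Fin N)) (f : Euc N → ℂ), ContDiff ℝ (⊤ : ℕ∞) f →
      ContDiff ℝ (⊤ : ℕ∞) (l.foldr (fun i g => pdPow i (α i) g) f) := by
    intro l f hf
    induction l with
    | nil => exact hf
    | cons i l ih => exact pdPow_smooth i _ ih
  unfold mderiv
  induction List.finRange N with
  | nil => rfl
  | cons i l ih =>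
    simp only [List.foldr_cons]
    rw [ih, pdPow_smul i _ c (hs l f hf)]

/-- The product measure on multi-indices times space. -/
abbrev muProd (N : ℕ) : Measure ((Fin N → ℕ) × Euc N) :=
  (Measure.count : Measure (Fin N → ℕ)).prod (volume : Measure (Euc N))

theorem eLpNorm_muProd {N : ℕ} (r : ℝ) (hr : 0 < r) (H : (Fin N → ℕ) × Euc N → ℂ)
    (hH : Measurable H) :
    eLpNorm H (ENNReal.ofReal r) (muProd N)
      = (∑' α, (eLpNorm (fun x => H (α, x)) (ENNReal.ofReal r) volume) ^ r) ^ (1/r) := by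
  have hro : ENNReal.ofReal r ≠ 0 := by simpa using hr
  rw [eLpNorm_eq_lintegral_rpow_enorm_toReal hro ENNReal.ofReal_ne_top, ENNReal.toReal_ofReal hr.le,
    lintegral_prod _ (by fun_prop), lintegral_count]
  congr 2
  ext α
  rw [eLpNorm_eq_lintegral_rpow_enorm_toReal hro ENNReal.ofReal_ne_top, ENNReal.toReal_ofReal hr.le,
    ← ENNReal.rpow_mul, one_div, inv_mul_cancel₀ hr.ne', ENNReal.rpow_one]

/-- scaling in the weighted norm -/
theorem eLpNorm_scale {N : ℕ} (r : ℝ) (hr : 0 < r) (c : ℝ) (u : Euc N → ℂ) (v : Euc N → ℝ)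
    (h : ∀ x, ‖u x‖ = Real.exp c * ‖v x‖) :
    (eLpNorm u (ENNReal.ofReal r) volume) ^ r
      = (eLpNorm v (ENNReal.ofReal r) volume) ^ r * ENNReal.ofReal (Real.exp (r * c)) := by
  have : eLpNorm u (ENNReal.ofReal r) volume
      = eLpNorm (Real.exp c • v) (ENNReal.ofReal r) volume := by
    apply eLpNorm_congr_norm_ae
    refine Eventually.of_forall fun x => ?_
    rw [h, Pi.smul_apply, norm_smul, Real.norm_of_nonneg (Real.exp_pos c).le]
  rw [this, eLpNorm_const_smul, ENNReal.mul_rpow_of_nonneg _ _ hr.le, mul_comm]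
  congr 1
  rw [← ofReal_norm, Real.norm_eq_abs, abs_of_pos (Real.exp_pos c),
    ENNReal.ofReal_rpow_of_nonneg (Real.exp_pos c).le hr.le, ← Real.exp_mul, mul_comm]

/-- The weight on the product space. -/
def wt {N : ℕ} (ω : ℝ → ℝ) (m : ℕ) (n : ℤ) (z : (Fin N → ℕ) × Euc N) : ℝ :=
  Real.exp (-((m : ℝ) * phiStar ω ((msize z.1 : ℝ) / m))) * Real.exp (-((n : ℝ) * ω ‖z.2‖))

/-- The embedding. -/
def emb {N : ℕ} (ω : ℝ → ℝ) (m : ℕ) (n : ℤ) (φ : Euc N → ℂ) (z : (Fin N → ℕ) × Euc N) : ℂ :=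
  (-1 : ℂ) ^ (msize z.1) * ((wt ω m n z : ℝ) : ℂ) * mderiv z.1 φ z.2

theorem wt_measurable {N : ℕ} (ω : ℝ → ℝ) (hω : IsWeightFun ω) (m : ℕ) (n : ℤ) :
    Measurable (wt (N := N) ω m n) := by
  refine measurable_from_prod_countable_right fun α => ?_
  have h : Continuous (fun x : Euc N => ω ‖x‖) :=
    hω.continuous.comp_continuous continuous_norm (fun x => norm_nonneg x)
  simp only [wt]
  exact (continuous_const.mul (Real.continuous_exp.comp (continuous_const.mul h).neg)).measurable

theorem emb_measurable {N : ℕ} (ω : ℝ → ℝ) (hω : IsWeightFun ω) (m : ℕ) (n : ℤ)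
    {φ : Euc N → ℂ} (hφ : ContDiff ℝ (⊤ : ℕ∞) φ) : Measurable (emb ω m n φ) := by
  refine measurable_from_prod_countable_right fun α => ?_
  have h1 : Measurable (fun x : Euc N => wt ω m n (α, x)) :=
    (wt_measurable ω hω m n).comp measurable_prodMk_left
  have h2 : Measurable (mderiv α φ) := (mderiv_smooth α hφ).continuous.measurable
  simp only [emb]
  exact (measurable_const.mul (Complex.measurable_ofReal.comp h1)).mul h2

theorem rnorm_eq {N : ℕ} (ω : ℝ → ℝ) (hω : IsWeightFun ω) (m : ℕ) (n : ℤ) (p : ℝ) (hp : 0 < p)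
    {φ : Euc N → ℂ} (hφ : ContDiff ℝ (⊤ : ℕ∞) φ) :
    rnorm ω m n p φ = eLpNorm (emb ω m n φ) (ENNReal.ofReal p) (muProd N) := by
  rw [eLpNorm_muProd p hp _ (emb_measurable ω hω m n hφ), rnorm]
  congr 2
  ext α
  rw [wLp, eLpNorm_scale p hp (-((m : ℝ) * phiStar ω ((msize α : ℝ) / m)))
    (fun x => emb ω m n φ (α, x))
    (fun x => Real.exp (-((n : ℝ) * ω ‖x‖)) * ‖mderiv α φ x‖)]
  · congr 3
    ring
  · intro x
    simp only [emb, wt, norm_mul, norm_pow, norm_neg, norm_one, one_pow, one_mul,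
      Complex.norm_real, mul_assoc, Real.norm_eq_abs, Real.abs_exp, abs_norm]

theorem memO_iff {N : ℕ} (ω : ℝ → ℝ) (hω : IsWeightFun ω) (m : ℕ) (n : ℤ) (p : ℝ) (hp : 0 < p)
    (φ : Euc N → ℂ) : memO ω m n p φ ↔
      ContDiff ℝ (⊤ : ℕ∞) φ ∧ MemLp (emb ω m n φ) (ENNReal.ofReal p) (muProd N) := by
  constructor
  · rintro ⟨h1, h2⟩
    refine ⟨h1, (emb_measurable ω hω m n h1).aestronglyMeasurable, ?_⟩
    rwa [← rnorm_eq ω hω m n p hp h1]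
  · rintro ⟨h1, h2⟩
    refine ⟨h1, ?_⟩
    rw [rnorm_eq ω hω m n p hp h1]
    exact h2.2

theorem emb_add {N : ℕ} (ω : ℝ → ℝ) (m : ℕ) (n : ℤ) {φ ψ : Euc N → ℂ}
    (hφ : ContDiff ℝ (⊤ : ℕ∞) φ) (hψ : ContDiff ℝ (⊤ : ℕ∞) ψ) :
    emb ω m n (φ + ψ) = emb ω m n φ + emb ω m n ψ := by
  ext z
  simp only [emb, Pi.add_apply, mderiv_add z.1 hφ hψ, mul_add]

theorem emb_smul {N : ℕ} (ω : ℝ → ℝ) (m : ℕ) (n : ℤ) (c : ℂ) {φ : Euc N → ℂ}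
    (hφ : ContDiff ℝ (⊤ : ℕ∞) φ) : emb ω m n (c • φ) = c • emb ω m n φ := by
  ext z
  simp only [emb, Pi.smul_apply, mderiv_smul z.1 c hφ, smul_eq_mul]
  ring

/-- The space `O^m_{n,ω,p}` as a submodule. -/
def OSub {N : ℕ} (ω : ℝ → ℝ) (hω : IsWeightFun ω) (m : ℕ) (n : ℤ) (p : ℝ) (hp : 0 < p) :
    Submodule ℂ (Euc N → ℂ) where
  carrier := {φ | memO ω m n p φ}
  add_mem' := by
    intro φ ψ hφ hψ
    simp only [Set.mem_ofPred_eq, memO_iff ω hω m n p hp] at *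
    refine ⟨hφ.1.add hψ.1, ?_⟩
    rw [emb_add ω m n hφ.1 hψ.1]
    exact hφ.2.add hψ.2
  zero_mem' := by
    simp only [Set.mem_ofPred_eq, memO_iff ω hω m n p hp]
    have h0 : ContDiff ℝ (⊤ : ℕ∞) (0 : Euc N → ℂ) := contDiff_const (c := (0:ℂ))
    refine ⟨h0, ?_⟩
    have := emb_smul ω m n 0 h0
    rw [zero_smul, zero_smul] at this
    rw [this]
    exact MemLp.zero
  smul_mem' := by
    intro c φ hφ
    simp only [Set.mem_ofPred_eq, memO_iff ω hω m n p hp] at *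
    refine ⟨contDiff_const.smul hφ.1, ?_⟩
    rw [emb_smul ω m n c hφ.1]
    exact hφ.2.const_smul c

/-- Structure theorem for `(O^m_{n,ω,p}(ℝ^N))'`, `1 < p < ∞`: every continuous linear
functional is of the form `T = Σ_α ∂^α f_α` with `Σ_α ‖e^{nω}f_α‖_{p'}^{p'} e^{p'mφ*(|α|/m)} < ∞`. -/
theorem Omnp_dual_structure
    {N : ℕ} (ω : ℝ → ℝ) (hω : IsWeightFun ω)
    (m : ℕ) (hm : 0 < m) (n : ℤ) (p p' : ℝ) (hp : 1 < p) (hconj : 1/p + 1/p' = 1)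
    (T : (Euc N → ℂ) → ℂ)
    (hadd : ∀ φ ψ, memO ω m n p φ → memO ω m n p ψ → T (φ + ψ) = T φ + T ψ)
    (hsmul : ∀ (c : ℂ) φ, memO ω m n p φ → T (c • φ) = c * T φ)
    (C : ℝ) (hC : 0 ≤ C)
    (hbound : ∀ φ, memO ω m n p φ → ‖T φ‖ ≤ C * (rnorm ω m n p φ).toReal) :
    ∃ f : (Fin N → ℕ) → Euc N → ℂ,
      (∀ α, AEStronglyMeasurable (f α) volume) ∧
      (∑' α : Fin N → ℕ,
        (wLp (ENNReal.ofReal p') (fun x => (n : ℝ) * ω ‖x‖) (f α)) ^ p' *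
          ENNReal.ofReal (Real.exp (p' * (m : ℝ) * phiStar ω ((msize α : ℝ) / m)))) < ⊤ ∧
      ∀ φ, memO ω m n p φ →
        T φ = ∑' α : Fin N → ℕ, (-1 : ℂ) ^ (msize α) * ∫ x, f α x * mderiv α φ x := by
  have hp0 : 0 < p := zero_lt_one.trans hp
  have hpq : p.HolderConjugate p' := by
    rw [Real.holderConjugate_iff]
    exact ⟨hp, by simpa [one_div] using hconj⟩
  have hq0 := hpq.symm.pos
  let V := OSub (N := N) ω hω m n p hp0
  have hV : ∀ v : V, memO ω m n p (v : Euc N → ℂ) := fun v => v.2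
  let T' : V →ₗ[ℂ] ℂ :=
    { toFun := fun v => T v
      map_add' := fun v w => hadd _ _ (hV v) (hV w)
      map_smul' := fun c v => hsmul c _ (hV v) }
  let Φ : V →ₗ[ℂ] ((Fin N → ℕ) × Euc N → ℂ) :=
    { toFun := fun v => emb ω m n v
      map_add' := fun v w => emb_add ω m n (hV v).1 (hV w).1
      map_smul' := fun c v => emb_smul ω m n c (hV v).1 }
  obtain ⟨h, hm, hL, hrep⟩ := rep_sigmaFinite (muProd N) p p' hpq Φ
    (fun v => ((memO_iff ω hω m n p hp0 _).1 (hV v)).2) T' C (fun v => by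
      have := hbound v (hV v)
      rwa [rnorm_eq ω hω m n p hp0 (hV v).1] at this)
  have hwm := wt_measurable (N := N) ω hω m n
  refine ⟨fun α x => h (α, x) * ((wt ω m n (α, x) : ℝ) : ℂ), fun α => ?_, ?_, fun φ hφ => ?_⟩
  · have h1 : Measurable (fun x : Euc N => wt ω m n (α, x)) := hwm.comp measurable_prodMk_left
    have h2 : Measurable (fun x : Euc N => h (α, x)) := hm.measurable.comp measurable_prodMk_left
    exact (h2.mul (Complex.measurable_ofReal.comp h1)).aestronglyMeasurable
  · have h1 := hL.2
    rw [eLpNorm_muProd p' hq0 h hm.measurable,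
      ENNReal.rpow_lt_top_iff_of_pos (by positivity)] at h1
    convert h1 using 3 with α
    rw [wLp, mul_assoc p', ← eLpNorm_scale p' hq0 ((m : ℝ) * phiStar ω ((msize α : ℝ) / m))
      (fun x => h (α, x))]
    intro x
    simp only [wt, norm_mul, Complex.norm_real, norm_norm, Real.norm_eq_abs, Real.abs_exp,
      abs_norm]
    generalize (m : ℝ) * phiStar ω ((msize α : ℝ) / m) = a
    generalize (n : ℝ) * ω ‖x‖ = b
    have h1 : Real.exp a * Real.exp (-a) = 1 := by rw [← Real.exp_add]; simp
    have h2 : Real.exp b * Real.exp (-b) = 1 := by rw [← Real.exp_add]; simp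
    calc ‖h (α, x)‖ = (Real.exp a * Real.exp (-a)) * (Real.exp b * Real.exp (-b)) * ‖h (α, x)‖ := by
          rw [h1, h2]; ring
      _ = _ := by ring
  · have hφL := ((memO_iff ω hω m n p hp0 _).1 hφ).2
    have e := hrep ⟨φ, hφ⟩
    change T φ = ∫ z, h z * emb ω m n φ z ∂(muProd N) at e
    have hc : HolderConjugate (ENNReal.ofReal p') (ENNReal.ofReal p) := hpq.symm.ennrealOfReal
    have hint : Integrable (fun z => h z * emb ω m n φ z) (muProd N) :=
      hL.integrable_mul hφL
    rw [e, integral_prod _ hint, integral_countable hint.integral_prod_left]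
    congr 1
    ext α
    rw [measureReal_def, Measure.count_singleton, ENNReal.toReal_one, one_smul,
      ← integral_const_mul]
    congr 1
    ext x
    simp only [emb]
    ring
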